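/- (Theorem 2, consistency against fixed alternatives.) Let q ≥ 2 and let θ̂_n = (θ̂_{n,1}, θ̂_{n,0,1}, …, θ̂_{n,0,q}) be random vectors in ℝ^{q+1}. Let θ_1, θ_0 ∈ ℝ with θ_1 > θ_0, let σ > 0 and σ_1, …, σ_q ≥ 0 with at most one σ_k = 0, and suppose √n (θ̂_{n,1} − θ_1, θ̂_{n,0,1} − θ_0, …, θ̂_{n,0,q} − θ_0) converges in distribution to the normal law N(0, diag(σ², σ_1², …, σ_q²)) on ℝ^{q+1}. Then for every w ∈ (0,1), E φ(θ̂_n, w) → 1 as n → ∞. -/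

import Mathlib

/-!
The statistic `T` of any rearrangement of `s` depends only on the sum of the first two entries,
since the total is fixed. Hence `T (s^▽)` is the maximum of `T` over all rearrangements of `s`
(`Tstat_perm_le`, `Tstat_le_rearr`), and the test rejects exactly when `s` itself attains this
maximum. This shows that the test is measurable (`measurable_phiTest`), and that it rejects
as soon as both treated entries dominate all control entries.

If every coordinate of `x` is within `ε = (1 - w) (θ₁ - θ₀) / 4` of its limit, the treated entries
`(1 ± w) (x₁ - x̄₀)` are at least `2ε` and the control entries at most `2ε`, so the test rejects
(`phiTest_eq_one_of_close`). Weak convergence of `√n (θ̂ₙ - θ)` gives tightness: for a tent function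
`f_M x = max 0 (1 - ‖x‖ / M)` and `√n ε ≥ M`, one has `E φ ≥ E f_M (√n (θ̂ₙ - θ))`, which tends
to `∫ f_M` under the limit law, and this integral tends to `1` as `M → ∞`.
-/

open MeasureTheory ProbabilityTheory Filter Set

noncomputable section

/-- Standard normal cumulative distribution function `Φ`. -/
def Phi (x : ℝ) : ℝ := ((gaussianReal 0 1) (Set.Iic x)).toReal

/-- Standard normal density `ϕ`. -/
def stdNormalPDF (y : ℝ) : ℝ := gaussianPDFReal 0 1 y

/-- Mean of the `q` control coordinates of `x = (x₁, x₀₁, …, x₀q)`. -/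
def xbar (q : ℕ) (x : Fin (q + 1) → ℝ) : ℝ := (∑ k : Fin q, x k.succ) / q

/-- The weighted, recentered vector `S(x, w)`. -/
def Svec (q : ℕ) (w : ℝ) (x : Fin (q + 1) → ℝ) : Fin (q + 2) → ℝ := fun j =>
  if j.val = 0 then (1 + w) * (x 0 - xbar q x)
  else if j.val = 1 then (1 - w) * (x 0 - xbar q x)
  else x ⟨j.val - 1, by have := j.isLt; omega⟩ - xbar q x

/-- The decreasing rearrangement `s^▽` of a tuple `s`. -/
def rearr {n : ℕ} (s : Fin n → ℝ) : Fin n → ℝ := fun i => (s ∘ Tuple.sort s) i.rev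

/-- The difference-of-means statistic `T(s)`. -/
def Tstat (q : ℕ) (s : Fin (q + 2) → ℝ) : ℝ :=
  (s 0 + s 1) / 2 - (∑ k : Fin q, s ⟨k.val + 2, by have := k.isLt; omega⟩) / q

/-- The rearrangement test `φ(x, w) = 1{T(S(x,w)) = T(S(x,w)^▽)}`. -/
def phiTest (q : ℕ) (x : Fin (q + 1) → ℝ) (w : ℝ) : ℝ :=
  if Tstat q (Svec q w x) = Tstat q (rearr (Svec q w x)) then 1 else 0

/-- The size bound `ξ_q(w, ρ)`. -/
def xiBound (q : ℕ) (w ρ : ℝ) : ℝ :=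
  (1 / 2) ^ (q + 1)
    + (∫ y in Set.Ioi (0 : ℝ), (Phi ((1 - w) * ρ * y)) ^ (q - 1) * stdNormalPDF y)
    + sInf ((fun t : ℝ => Phi (Real.sqrt ((q : ℝ) - 1) * w * t) ^ (q - 1)
        + 2 * Phi (-(q : ℝ) * t)) '' Set.Ioi 0)

/-- The lower bound on power from Proposition 1. -/
def powerBound (q : ℕ) (w δ σ : ℝ) (σs : Fin q → ℝ) : ℝ :=
  2 ^ q * sSup ((fun t : ℝ => Phi (δ / σ - ((1 + w) / (1 - w)) * t) *
      ∏ k : Fin q, (Phi ((σ / σs k) * t) - 1 / 2)) '' Set.Ici 0)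

theorem Tstat_eq (q : ℕ) (s : Fin (q + 2) → ℝ) :
    Tstat q s = (s 0 + s 1) / 2 - ((∑ i, s i) - s 0 - s 1) / q := by
  rw [Fin.sum_univ_succ, Fin.sum_univ_succ]
  unfold Tstat
  have : ∀ k : Fin q, (⟨k.val + 2, by omega⟩ : Fin (q + 2)) = k.succ.succ := fun k => rfl
  simp only [this, Fin.succ_zero_eq_one]
  ring

/-- If the first two entries dominate all the others, no rearrangement increases `T`. -/
theorem Tstat_perm_le (q : ℕ) (s : Fin (q + 2) → ℝ)
    (h0 : ∀ j : Fin (q + 2), 2 ≤ j.val → s j ≤ s 0)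
    (h1 : ∀ j : Fin (q + 2), 2 ≤ j.val → s j ≤ s 1) (π : Equiv.Perm (Fin (q + 2))) :
    Tstat q (s ∘ π) ≤ Tstat q s := by
  rw [Tstat_eq, Tstat_eq]
  have hsum : ∑ i, (s ∘ π) i = ∑ i, s i := Equiv.sum_comp π s
  rw [hsum]
  have hne : π 0 ≠ π 1 := fun h => by simpa using π.injective h
  have hcase : ∀ j : Fin (q + 2), j = 0 ∨ j = 1 ∨ 2 ≤ j.val := by
    intro j
    simp only [Fin.ext_iff, Fin.val_zero, Fin.val_one]
    omega
  have key : s (π 0) + s (π 1) ≤ s 0 + s 1 := by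
    rcases hcase (π 0) with ha | ha | ha <;> rcases hcase (π 1) with hb | hb | hb
    · exact absurd (ha.trans hb.symm) hne
    · rw [ha, hb]
    · rw [ha]; linarith [h1 _ hb]
    · rw [ha, hb, add_comm]
    · exact absurd (ha.trans hb.symm) hne
    · rw [ha]; linarith [h0 _ hb]
    · rw [hb]; linarith [h1 _ ha]
    · rw [hb]; linarith [h0 _ ha]
    · linarith [h0 _ ha, h1 _ hb]
  have h2 : ((∑ i, s i) - s 0 - s 1) / q ≤ ((∑ i, s i) - s (π 0) - s (π 1)) / q := by
    apply div_le_div_of_nonneg_right _ (Nat.cast_nonneg q)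
    linarith
  simp only [Function.comp]
  linarith

/-- The decreasing rearrangement maximizes `T` over all rearrangements. -/
theorem Tstat_le_rearr (q : ℕ) (s : Fin (q + 2) → ℝ) (π : Equiv.Perm (Fin (q + 2))) :
    Tstat q (s ∘ π) ≤ Tstat q (rearr s) := by
  have hanti : ∀ i j : Fin (q + 2), i ≤ j → rearr s j ≤ rearr s i := fun i j hij =>
    Tuple.monotone_sort s (Fin.rev_le_rev.mpr hij)
  have h := Tstat_perm_le q (rearr s)
    (fun j _ => hanti _ _ (Fin.zero_le j))
    (fun j hj => hanti _ _ (by rw [Fin.le_def, Fin.val_one]; omega))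
    (π.trans ((Tuple.sort s).symm.trans Fin.revPerm))
  have he : rearr s ∘ (π.trans ((Tuple.sort s).symm.trans Fin.revPerm)) = s ∘ π := by
    funext i
    simp [rearr]
  rwa [he] at h

/-- The test rejects iff the observed arrangement maximizes `T`. Unlike the definition, the right
side does not involve sorting, so it is visibly a finite intersection of closed conditions. -/
theorem Tstat_eq_rearr_iff (q : ℕ) (s : Fin (q + 2) → ℝ) :
    Tstat q s = Tstat q (rearr s) ↔
      ∀ π : Equiv.Perm (Fin (q + 2)), Tstat q (s ∘ π) ≤ Tstat q s := by
  constructor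
  · intro h π
    rw [h]
    exact Tstat_le_rearr q s π
  · intro h
    apply le_antisymm
    · simpa using Tstat_le_rearr q s (Equiv.refl _)
    · exact h (Fin.revPerm.trans (Tuple.sort s))

theorem measurable_Svec (q : ℕ) (w : ℝ) : Measurable (Svec q w) := by
  apply measurable_pi_lambda
  intro j
  unfold Svec xbar
  split_ifs <;> fun_prop

theorem measurable_phiTest (q : ℕ) (w : ℝ) : Measurable (fun x => phiTest q x w) := by
  unfold phiTest
  refine Measurable.ite ?_ measurable_const measurable_const
  simp only [Tstat_eq_rearr_iff, ofPred_forall]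
  refine MeasurableSet.iInter fun π => ?_
  have hS : ∀ j, Measurable fun x => Svec q w x j :=
    fun j => (measurable_pi_apply j).comp (measurable_Svec q w)
  apply measurableSet_le
  · simp only [Tstat, Function.comp]
    fun_prop
  · simp only [Tstat]
    fun_prop

/-- On the event that all estimates are within `(1 - w) (θ₁ - θ₀) / 4` of their limits, the test
rejects. -/
theorem phiTest_eq_one_of_close (q : ℕ) (hq : 2 ≤ q) (w θ1 θ0 : ℝ) (hθ : θ1 > θ0)
    (hw : w ∈ Set.Ioo (0 : ℝ) 1) (x : Fin (q + 1) → ℝ)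
    (hx : ∀ i, |x i - (Fin.cons θ1 (fun _ => θ0) : Fin (q + 1) → ℝ) i|
      ≤ (1 - w) * (θ1 - θ0) / 4) :
    phiTest q x w = 1 := by
  obtain ⟨hw0, hw1⟩ := hw
  have hq0 : (0 : ℝ) < q := by exact_mod_cast (by omega : 0 < q)
  set ε := (1 - w) * (θ1 - θ0) / 4 with hε
  have hx0 := abs_le.mp (hx 0)
  have hxk : ∀ k : Fin q, |x k.succ - θ0| ≤ ε := fun k => by simpa using hx k.succ
  simp only [Fin.cons_zero] at hx0
  have hup : xbar q x ≤ θ0 + ε := by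
    unfold xbar
    rw [div_le_iff₀ hq0]
    calc ∑ k : Fin q, x k.succ ≤ ∑ _k : Fin q, (θ0 + ε) :=
          Finset.sum_le_sum fun k _ => by linarith [(abs_le.mp (hxk k)).2]
      _ = (θ0 + ε) * q := by simp; ring
  have hlo : θ0 - ε ≤ xbar q x := by
    unfold xbar
    rw [le_div_iff₀ hq0]
    calc (θ0 - ε) * q = ∑ _k : Fin q, (θ0 - ε) := by simp; ring
      _ ≤ ∑ k : Fin q, x k.succ :=
          Finset.sum_le_sum fun k _ => by linarith [(abs_le.mp (hxk k)).1]
  have hΔ : 0 < θ1 - θ0 := sub_pos.mpr hθ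
  have hd : (θ1 - θ0) / 2 ≤ x 0 - xbar q x := by nlinarith
  have hlow : 2 * ε ≤ (1 - w) * (x 0 - xbar q x) := by nlinarith
  have hhigh : 2 * ε ≤ (1 + w) * (x 0 - xbar q x) := by nlinarith
  have hS : ∀ j : Fin (q + 2), 2 ≤ j.val → Svec q w x j ≤ 2 * ε := by
    intro j hj
    have hj0 : j.val ≠ 0 := by omega
    have hj1 : j.val ≠ 1 := by omega
    simp only [Svec, hj0, hj1, if_false]
    have he : (⟨j.val - 1, by have := j.isLt; omega⟩ : Fin (q + 1))
        = (⟨j.val - 2, by have := j.isLt; omega⟩ : Fin q).succ := by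
      ext
      simp only [Fin.val_succ]
      omega
    rw [he]
    linarith [(abs_le.mp (hxk ⟨j.val - 2, by have := j.isLt; omega⟩)).2]
  have hS0 : Svec q w x 0 = (1 + w) * (x 0 - xbar q x) := by simp [Svec]
  have hS1 : Svec q w x 1 = (1 - w) * (x 0 - xbar q x) := by simp [Svec]
  unfold phiTest
  rw [if_pos]
  rw [Tstat_eq_rearr_iff]
  exact Tstat_perm_le q _ (fun j hj => (hS j hj).trans (hS0 ▸ hhigh))
    (fun j hj => (hS j hj).trans (hS1 ▸ hlow))

/-- The tent function `x ↦ max 0 (1 - ‖x‖ / M)`, for `M > 0` a bounded continuous minorant of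
the indicator of the ball of radius `M`; for `M = 0` it is the constant `1`. -/
def tent (E : Type*) [NormedAddCommGroup E] (M : ℝ) (hM : 0 ≤ M) : BoundedContinuousFunction E ℝ :=
  BoundedContinuousFunction.ofNormedAddCommGroup (fun x => max 0 (1 - ‖x‖ / M))
    (by fun_prop) 1 (fun x => by
      have : 0 ≤ ‖x‖ / M := by positivity
      rw [Real.norm_of_nonneg (le_max_left _ _)]
      exact max_le zero_le_one (by linarith))

theorem tent_apply {E : Type*} [NormedAddCommGroup E] (M : ℝ) (hM : 0 ≤ M) (x : E) :
    tent E M hM x = max 0 (1 - ‖x‖ / M) := rfl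

theorem tent_le_one {E : Type*} [NormedAddCommGroup E] (M : ℝ) (hM : 0 ≤ M) (x : E) :
    tent E M hM x ≤ 1 := by
  have : 0 ≤ ‖x‖ / M := by positivity
  exact max_le zero_le_one (by linarith)

theorem tendsto_integral_tent {E : Type*} [NormedAddCommGroup E] [MeasurableSpace E] [BorelSpace E]
    [SecondCountableTopology E] (ν : Measure E) [IsProbabilityMeasure ν] :
    Tendsto (fun M : ℕ => ∫ x, tent E (M : ℝ) (Nat.cast_nonneg M) x ∂ν) atTop (nhds 1) := by
  have h1 : (1 : ℝ) = ∫ _x : E, (1 : ℝ) ∂ν := by simp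
  rw [h1]
  refine tendsto_integral_of_dominated_convergence (fun _ => (1 : ℝ)) ?_ ?_ ?_ ?_
  · intro M
    exact (tent E (M : ℝ) (Nat.cast_nonneg M)).continuous.aestronglyMeasurable
  · exact integrable_const _
  · intro M
    refine ae_of_all _ fun x => ?_
    rw [tent_apply, Real.norm_of_nonneg (le_max_left _ _), ← tent_apply _ (Nat.cast_nonneg M)]
    exact tent_le_one _ _ x
  · refine ae_of_all _ fun x => ?_
    simp only [tent_apply]
    have h : Tendsto (fun M : ℕ => max 0 (1 - ‖x‖ / (M : ℝ))) atTop (nhds (max 0 (1 - 0))) :=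
      tendsto_const_nhds.max (tendsto_const_nhds.sub (tendsto_const_div_atTop_nhds_zero_nat ‖x‖))
    simpa using h

/-- Theorem 2, consistency against fixed alternatives. -/
theorem statement16 {Ω : Type*} [MeasurableSpace Ω] (P : Measure Ω) [IsProbabilityMeasure P]
    (q : ℕ) (hq : 2 ≤ q)
    (θhat : ℕ → Ω → Fin (q + 1) → ℝ) (hmeas : ∀ n, Measurable (θhat n))
    (θ1 θ0 : ℝ) (hθ : θ1 > θ0)
    (σ : ℝ) (hσ : 0 < σ) (σs : Fin q → ℝ) (hσs : ∀ k, 0 ≤ σs k)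
    (hone : ∀ j k : Fin q, σs j = 0 → σs k = 0 → j = k)
    (hconv : ∀ f : BoundedContinuousFunction (Fin (q + 1) → ℝ) ℝ,
      Tendsto (fun n : ℕ => ∫ ω, f (fun i =>
          Real.sqrt n * (θhat n ω i - (Fin.cons θ1 (fun _ => θ0) : Fin (q + 1) → ℝ) i)) ∂P)
        atTop
        (nhds (∫ x, f x ∂(Measure.pi (fun i : Fin (q + 1) =>
          gaussianReal 0
            ((Fin.cons (σ ^ 2) (fun k => (σs k) ^ 2) : Fin (q + 1) → ℝ) i).toNNReal)))))
    (w : ℝ) (hw : w ∈ Set.Ioo (0 : ℝ) 1) :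
    Tendsto (fun n : ℕ => ∫ ω, phiTest q (θhat n ω) w ∂P) atTop (nhds 1) := by
  set ε := (1 - w) * (θ1 - θ0) / 4 with hε
  have hεpos : 0 < ε := by
    have h1 : 0 < 1 - w := sub_pos.mpr hw.2
    have h2 : 0 < θ1 - θ0 := sub_pos.mpr hθ
    positivity
  have hint : ∀ n, Integrable (fun ω => phiTest q (θhat n ω) w) P := by
    intro n
    refine Integrable.of_bound
      ((measurable_phiTest q w).comp (hmeas n)).aestronglyMeasurable 1 (ae_of_all _ fun ω => ?_)
    simp only [phiTest]
    split_ifs <;> simp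
  have hle : ∀ n, ∫ ω, phiTest q (θhat n ω) w ∂P ≤ 1 := by
    intro n
    calc ∫ ω, phiTest q (θhat n ω) w ∂P ≤ ∫ _ω, (1 : ℝ) ∂P := by
          refine integral_mono (hint n) (integrable_const _) fun ω => ?_
          simp only [phiTest]
          split_ifs <;> simp
      _ = 1 := by simp
  refine tendsto_order.mpr ⟨fun a ha => ?_, fun a ha => Eventually.of_forall fun n =>
    (hle n).trans_lt ha⟩
  obtain ⟨M, hM, hM0⟩ := (((tendsto_order.mp (tendsto_integral_tent
    (Measure.pi (fun i : Fin (q + 1) => gaussianReal 0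
      ((Fin.cons (σ ^ 2) (fun k => (σs k) ^ 2) : Fin (q + 1) → ℝ) i).toNNReal)))).1 a ha).and
    (eventually_gt_atTop 0)).exists
  have hMpos : (0 : ℝ) < M := by exact_mod_cast hM0
  have hlarge : ∀ᶠ n : ℕ in atTop, (M : ℝ) / ε ≤ Real.sqrt n :=
    (Real.tendsto_sqrt_atTop.comp tendsto_natCast_atTop_atTop).eventually_ge_atTop _
  filter_upwards [(tendsto_order.mp (hconv (tent _ (M : ℝ) (Nat.cast_nonneg M)))).1 a hM, hlarge]
    with n hn hnM
  refine hn.trans_le (integral_mono ?_ (hint n) fun ω => ?_)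
  · refine Integrable.of_bound (Measurable.aestronglyMeasurable ?_) 1 (ae_of_all _ fun ω => ?_)
    · refine (tent _ (M : ℝ) (Nat.cast_nonneg M)).continuous.measurable.comp ?_
      refine measurable_pi_lambda _ fun i => ?_
      exact (((measurable_pi_apply i).comp (hmeas n)).sub_const _).const_mul _
    · rw [tent_apply, Real.norm_of_nonneg (le_max_left _ _), ← tent_apply _ (Nat.cast_nonneg M)]
      exact tent_le_one _ _ _
  · by_cases hc : ∀ i, |θhat n ω i - (Fin.cons θ1 (fun _ => θ0) : Fin (q + 1) → ℝ) i| ≤ ε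
    · simp only [phiTest_eq_one_of_close q hq w θ1 θ0 hθ hw _ hc]
      exact tent_le_one _ _ _
    · push Not at hc
      -- A coordinate off by more than `ε` puts the rescaled vector outside the open ball of
      -- radius `M`, where the tent function vanishes.
      obtain ⟨i, hi⟩ := hc
      have hphi : 0 ≤ phiTest q (θhat n ω) w := by
        simp only [phiTest]
        split_ifs <;> simp
      refine le_trans (le_of_eq ?_) hphi
      simp only [tent_apply]
      apply max_eq_left
      rw [sub_nonpos, one_le_div hMpos]
      refine le_trans ?_ (norm_le_pi_norm _ i)
      rw [Real.norm_eq_abs, abs_mul, abs_of_nonneg (Real.sqrt_nonneg _)]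
      calc (M : ℝ) = M / ε * ε := by field_simp
        _ ≤ _ := mul_le_mul hnM hi.le hεpos.le (Real.sqrt_nonneg _)
end
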